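/- Let d ≥ 2, let 𝕊^d be the unit sphere in ℝ^{d+1} with the Euclidean metric, and let γ_d := Γ((d+1)/2)/(Γ(d/2)Γ(1/2)). For s > d and N ≥ 2, every N-point configuration ω*_N minimizing the unweighted Riesz s-energy E_s(ω_N) = Σ_{i≠j} |x_i − x_j|^{−s} over N-point subsets of 𝕊^d satisfies δ(ω*_N) ≥ (d/γ_d)^{1/d} (1 − d/s)^{1/d} (d/s)^{1/s} N^{−1/d}. -/

import Mathlib

open Metric MeasureTheory Filter
open scoped ENNReal NNReal

noncomputable section

variable {A : Type*} [MetricSpace A]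

/-- The separation distance `δ(ω_N)` of a configuration of `N` points. -/
def sepDist {N : ℕ} (x : Fin N → A) : ℝ :=
  sInf {d : ℝ | ∃ i j : Fin N, i ≠ j ∧ d = dist (x i) (x j)}

/-- The mesh norm (covering radius) `ρ(ω_N, K)` of a configuration with respect to `K`. -/
def meshNorm {N : ℕ} (x : Fin N → A) (K : Set A) : ℝ :=
  sSup {d : ℝ | ∃ y ∈ K, d = ⨅ i : Fin N, dist y (x i)}

/-- The weighted Riesz `(s,w)`-energy of a configuration. -/
def rieszEnergy {N : ℕ} (s : ℝ) (w : A → A → ℝ) (x : Fin N → A) : ℝ :=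
  ∑ i : Fin N, ∑ j : Fin N, if i = j then 0 else w (x i) (x j) / dist (x i) (x j) ^ s

/-- `x` is an `N`-point `(s,w)`-energy minimizing configuration on `K`. -/
def IsEnergyMinimizer {N : ℕ} (s : ℝ) (w : A → A → ℝ) (K : Set A) (x : Fin N → A) : Prop :=
  Function.Injective x ∧ (∀ i, x i ∈ K) ∧
    ∀ y : Fin N → A, Function.Injective y → (∀ i, y i ∈ K) →
      rieszEnergy s w x ≤ rieszEnergy s w y

/-- The `N`-point best-packing distance `δ_N(K)`. -/
def bestPackingDist (K : Set A) (N : ℕ) : ℝ :=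
  sSup {d : ℝ | ∃ x : Fin N → A, Function.Injective x ∧ (∀ i, x i ∈ K) ∧ d = sepDist x}

/-- The `N`-point mesh norm `ρ_N(K)`. -/
def meshNormN (K : Set A) (N : ℕ) : ℝ :=
  sInf {d : ℝ | ∃ x : Fin N → A, Function.Injective x ∧ (∀ i, x i ∈ K) ∧ d = meshNorm x K}

/-- The minimal `N`-point `(s,w)`-energy `𝓔_s^w(N,K)`. -/
def minEnergy (s : ℝ) (w : A → A → ℝ) (K : Set A) (N : ℕ) : ℝ :=
  sInf {E : ℝ | ∃ x : Fin N → A, Function.Injective x ∧ (∀ i, x i ∈ K) ∧ E = rieszEnergy s w x}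

/-- `μ` is upper `α`-regular with constant `C₀`. -/
def IsUpperRegular [MeasurableSpace A] (μ : Measure A) (α C₀ : ℝ) : Prop :=
  ∀ (x : A) (r : ℝ), 0 < r → r ≤ diam (Set.univ : Set A) →
    μ (closedBall x r) ≤ ENNReal.ofReal (C₀ * r ^ α)

/-- `μ` is lower `α`-regular with constant `c₀`. -/
def IsLowerRegular [MeasurableSpace A] (μ : Measure A) (α c₀ : ℝ) : Prop :=
  ∀ (x : A) (r : ℝ), 0 < r → r ≤ diam (Set.univ : Set A) →
    ENNReal.ofReal (c₀⁻¹ * r ^ α) ≤ μ (closedBall x r)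

/-- `w` is an SLP weight on `K`: symmetric, lower semi-continuous on `K × K`,
nonnegative, and positive on the diagonal. -/
def IsSLPWeight (w : A → A → ℝ) (K : Set A) : Prop :=
  (∀ x ∈ K, ∀ y ∈ K, 0 ≤ w x y) ∧
  (∀ x ∈ K, ∀ y ∈ K, w x y = w y x) ∧
  LowerSemicontinuousOn (fun p : A × A => w p.1 p.2) (K ×ˢ K) ∧
  (∀ x ∈ K, 0 < w x x)

/-- The constant `γ_d = Γ((d+1)/2)/(Γ(d/2)Γ(1/2))`. -/
def gammaD (d : ℕ) : ℝ :=
  Real.Gamma (((d : ℝ) + 1) / 2) / (Real.Gamma ((d : ℝ) / 2) * Real.Gamma (1 / 2))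

/-!
If `x` minimizes the energy, then the potential at `x i` of the other points is at most its value
at any other point of the sphere. Let the uniform measure of balls of radius `r` be at most `C r^d`
and choose `r` with `N C r^d = 1 - d/s`. Outside the balls of radius `r` about the `x j` there
remains measure at least `d/s`, and integrating over the level sets of `|y - x j|^(-s)` shows that
the potential has integral at most `r^(-s)` there. So it is at most `(s/d) r^(-s)` at some point,
and hence `|x i - x j|^(-s) ≤ (s/d) r^(-s)` for every `j ≠ i`.

The constant `C = γ_d/d` comes from the density `γ_d (1 - u²)^(d/2 - 1)` of `u = ⟨p, y⟩` under the
uniform measure, since `1 - u² ≤ 2 - 2u` and the ball of radius `r` about `p` is `2 - 2u ≤ r²`.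
For the density, the cone over `{⟨p, y⟩ ∈ B}` is cut into lines parallel to `p`: at distance `r`
from the axis the height is `h = r u / √(1 - u²)`.
-/

/-- The Riesz `s`-potential at `y` of the points `x j`, `j ∈ J`. -/
def rieszPotential {ι : Type*} (s : ℝ) (x : ι → A) (J : Finset ι) (y : A) : ℝ :=
  ∑ j ∈ J, (dist y (x j) ^ s)⁻¹

/-- Upper `α`-regularity of `μ` at the points of `K`. In contrast to `IsUpperRegular`, the radii
are unrestricted: `Metric.diam Set.univ` is `0` when the ambient space is unbounded. -/
def IsUpperRegularOn [MeasurableSpace A] (μ : Measure A) (K : Set A) (α C : ℝ) : Prop :=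
  ∀ p ∈ K, ∀ r : ℝ, 0 < r → μ (closedBall p r) ≤ ENNReal.ofReal (C * r ^ α)

lemma le_sepDist_of_forall_le_dist {N : ℕ} (hN : 2 ≤ N) {x : Fin N → A} {δ : ℝ}
    (h : ∀ i j, i ≠ j → δ ≤ dist (x i) (x j)) : δ ≤ sepDist x := by
  refine le_csInf ⟨_, ⟨0, by omega⟩, ⟨1, by omega⟩, by simp, rfl⟩ ?_
  rintro _ ⟨i, j, hij, rfl⟩
  exact h i j hij

lemma rieszEnergy_eq_add_two_mul_rieszPotential {N : ℕ} (s : ℝ) (x : Fin N → A) (i : Fin N) :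
    rieszEnergy s (fun _ _ => 1) x =
      (∑ k ∈ Finset.univ.erase i, ∑ j ∈ Finset.univ.erase i,
        if k = j then 0 else 1 / dist (x k) (x j) ^ s) +
      2 * rieszPotential s x (Finset.univ.erase i) (x i) := by
  have row_self : (∑ j, if i = j then (0 : ℝ) else 1 / dist (x i) (x j) ^ s) =
      rieszPotential s x (Finset.univ.erase i) (x i) := by
    rw [← Finset.add_sum_erase _ _ (Finset.mem_univ i), if_pos rfl, zero_add]
    refine Finset.sum_congr rfl fun j hj => ?_
    rw [if_neg (Finset.ne_of_mem_erase hj).symm, one_div]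
  have row_other : ∀ k ∈ Finset.univ.erase i,
      (∑ j, if k = j then (0 : ℝ) else 1 / dist (x k) (x j) ^ s) =
        (dist (x i) (x k) ^ s)⁻¹ +
          ∑ j ∈ Finset.univ.erase i, if k = j then 0 else 1 / dist (x k) (x j) ^ s := by
    intro k hk
    rw [← Finset.add_sum_erase _ _ (Finset.mem_univ i), if_neg (Finset.ne_of_mem_erase hk),
      one_div, dist_comm]
  rw [rieszEnergy, ← Finset.add_sum_erase _ _ (Finset.mem_univ i), row_self,
    Finset.sum_congr rfl row_other, Finset.sum_add_distrib, ← rieszPotential]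
  ring

lemma injective_update_of_forall_ne {ι β : Type*} [DecidableEq ι] {f : ι → β}
    (hf : Function.Injective f) {i : ι} {b : β} (hb : ∀ j ≠ i, b ≠ f j) :
    Function.Injective (Function.update f i b) := by
  intro j k hjk
  grind [Function.update, Function.Injective]

/-- Moving the `i`-th point changes the energy by twice the change of the potential it sees. -/
lemma IsEnergyMinimizer.rieszPotential_le {N : ℕ} {s : ℝ} {K : Set A} {x : Fin N → A}
    (hx : IsEnergyMinimizer s (fun _ _ => 1) K x) (i : Fin N) {y : A} (hy : y ∈ K)
    (hne : ∀ j ≠ i, y ≠ x j) :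
    rieszPotential s x (Finset.univ.erase i) (x i) ≤
      rieszPotential s x (Finset.univ.erase i) y := by
  obtain ⟨hinj, hK, hmin⟩ := hx
  have hmove : rieszEnergy s (fun _ _ => 1) x ≤
      rieszEnergy s (fun _ _ => 1) (Function.update x i y) := by
    refine hmin _ (injective_update_of_forall_ne hinj hne) fun j => ?_
    rcases eq_or_ne j i with rfl | hj
    · simpa using hy
    · simpa [hj] using hK j
  have hupdate : ∀ j ∈ Finset.univ.erase i, Function.update x i y j = x j := fun j hj =>
    Function.update_of_ne (Finset.ne_of_mem_erase hj) ..
  have hpotential : rieszPotential s (Function.update x i y) (Finset.univ.erase i) y =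
      rieszPotential s x (Finset.univ.erase i) y :=
    Finset.sum_congr rfl fun j hj => by rw [hupdate j hj]
  have hrest : (∑ k ∈ Finset.univ.erase i, ∑ j ∈ Finset.univ.erase i, if k = j then (0 : ℝ) else
      1 / dist (Function.update x i y k) (Function.update x i y j) ^ s) =
      ∑ k ∈ Finset.univ.erase i, ∑ j ∈ Finset.univ.erase i,
        if k = j then 0 else 1 / dist (x k) (x j) ^ s :=
    Finset.sum_congr rfl fun k hk => Finset.sum_congr rfl fun j hj => by
      rw [hupdate k hk, hupdate j hj]
  rw [rieszEnergy_eq_add_two_mul_rieszPotential s x i,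
    rieszEnergy_eq_add_two_mul_rieszPotential s _ i, hrest, Function.update_self,
    hpotential] at hmove
  linarith

lemma inv_dist_rpow_le_rieszPotential {ι : Type*} {s : ℝ} {x : ι → A} {J : Finset ι} {j : ι}
    (hj : j ∈ J) (y : A) : (dist y (x j) ^ s)⁻¹ ≤ rieszPotential s x J y :=
  Finset.single_le_sum (f := fun j => (dist y (x j) ^ s)⁻¹) (fun _ _ => by positivity) hj

section UpperRegular

variable [MeasurableSpace A] {μ : Measure A} {K : Set A} {α s C r : ℝ}

lemma IsUpperRegularOn.measure_lt_inv_dist_rpow_le (hμ : IsUpperRegularOn μ K α C) (hs : 0 < s)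
    {p : A} (hp : p ∈ K) {t : ℝ} (ht : 0 < t) :
    μ {y | t < (dist y p ^ s)⁻¹} ≤ ENNReal.ofReal (C * t ^ (-(α / s))) := by
  have hsub : {y | t < (dist y p ^ s)⁻¹} ⊆ closedBall p (t ^ (-s)⁻¹) := by
    intro y (hy : t < (dist y p ^ s)⁻¹)
    have hdist : 0 < dist y p := dist_pos.2 fun h => by
      rw [h, dist_self, Real.zero_rpow hs.ne', inv_zero] at hy
      exact hy.not_gt ht
    rw [← Real.rpow_neg hdist.le] at hy
    exact (Real.le_rpow_inv_iff_of_neg hdist ht (neg_neg_of_pos hs)).2 hy.le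
  refine ((measure_mono hsub).trans (hμ p hp _ (by positivity))).trans_eq ?_
  rw [← Real.rpow_mul ht.le]
  congr 3
  ring

lemma setLIntegral_Ioc_const_mul_rpow {β T : ℝ} (hβ : -1 < β) (hC : 0 ≤ C) (hT : 0 ≤ T) :
    ∫⁻ t in Set.Ioc 0 T, ENNReal.ofReal (C * t ^ β) =
      ENNReal.ofReal (C * (T ^ (β + 1) / (β + 1))) := by
  have hint : IntegrableOn (fun t : ℝ => C * t ^ β) (Set.Ioc 0 T) :=
    ((intervalIntegrable_iff_integrableOn_Ioc_of_le hT).1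
      (intervalIntegral.intervalIntegrable_rpow' hβ)).const_mul C
  have hnonneg : 0 ≤ᵐ[volume.restrict (Set.Ioc 0 T)] fun t => C * t ^ β :=
    ae_restrict_of_forall_mem measurableSet_Ioc fun t ht =>
      mul_nonneg hC (Real.rpow_nonneg ht.1.le β)
  rw [← ofReal_integral_eq_lintegral_ofReal hint hnonneg, integral_const_mul,
    ← intervalIntegral.integral_of_le hT, integral_rpow (Or.inl hβ),
    Real.zero_rpow (by linarith), sub_zero]

variable [BorelSpace A]

lemma measurable_rieszPotential {ι : Type*} (s : ℝ) (x : ι → A) (J : Finset ι) :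
    Measurable (rieszPotential s x J) :=
  Finset.measurable_fun_sum J fun _ _ =>
    ((continuous_id.dist continuous_const).measurable.pow_const s).inv

lemma IsUpperRegularOn.lintegral_inv_dist_rpow_le (hμ : IsUpperRegularOn μ K α C) (hC : 0 ≤ C)
    (hs : 0 < s) (hαs : α < s) (hr : 0 < r) {p : A} (hp : p ∈ K) :
    ∫⁻ y in (closedBall p r)ᶜ, ENNReal.ofReal (dist y p ^ s)⁻¹ ∂μ ≤
      ENNReal.ofReal (C * (r ^ (α - s) / (1 - α / s))) := by
  have hmeas : Measurable fun y : A => (dist y p ^ s)⁻¹ :=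
    ((continuous_id.dist continuous_const).measurable.pow_const s).inv
  have hlayer : ∀ t ∈ Set.Ioi (0 : ℝ),
      (μ.restrict (closedBall p r)ᶜ) {y | t < (dist y p ^ s)⁻¹} ≤
        (Set.Ioc 0 (r ^ (-s))).indicator (fun t => ENNReal.ofReal (C * t ^ (-(α / s)))) t := by
    intro t (ht : 0 < t)
    by_cases htr : t ≤ r ^ (-s)
    · rw [Set.indicator_of_mem (Set.mem_Ioc.2 ⟨ht, htr⟩)]
      exact (Measure.restrict_apply_le _ _).trans (hμ.measure_lt_inv_dist_rpow_le hs hp ht)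
    · have hempty : {y | t < (dist y p ^ s)⁻¹} ∩ (closedBall p r)ᶜ = ∅ := by
        refine Set.eq_empty_of_forall_notMem fun y ⟨hty, hy⟩ => htr ?_
        have hry : r < dist y p := not_le.1 hy
        rw [Real.rpow_neg hr.le]
        exact (Set.mem_ofPred.1 hty).le.trans (by gcongr)
      rw [Measure.restrict_apply' isClosed_closedBall.measurableSet.compl, hempty, measure_empty]
      exact zero_le
  have hdiv : α / s < 1 := (div_lt_one hs).2 hαs
  have hexp : -s * (-(α / s) + 1) = α - s := by field_simp; ring
  calc ∫⁻ y in (closedBall p r)ᶜ, ENNReal.ofReal (dist y p ^ s)⁻¹ ∂μ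
      = ∫⁻ t in Set.Ioi 0, (μ.restrict (closedBall p r)ᶜ) {y | t < (dist y p ^ s)⁻¹} :=
        lintegral_eq_lintegral_meas_lt _ (ae_of_all _ fun y => by positivity) hmeas.aemeasurable
    _ ≤ ∫⁻ t in Set.Ioi 0, (Set.Ioc 0 (r ^ (-s))).indicator
          (fun t => ENNReal.ofReal (C * t ^ (-(α / s)))) t :=
        setLIntegral_mono' measurableSet_Ioi hlayer
    _ ≤ ∫⁻ t in Set.Ioc 0 (r ^ (-s)), ENNReal.ofReal (C * t ^ (-(α / s))) :=
        (setLIntegral_le_lintegral _ _).trans_eq (lintegral_indicator measurableSet_Ioc _)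
    _ = ENNReal.ofReal (C * (r ^ (α - s) / (1 - α / s))) := by
        rw [setLIntegral_Ioc_const_mul_rpow (by linarith) hC (by positivity), ← Real.rpow_mul hr.le,
          hexp, neg_add_eq_sub]

lemma IsUpperRegularOn.lintegral_rieszPotential_le (hμ : IsUpperRegularOn μ K α C) (hC : 0 ≤ C)
    (hs : 0 < s) (hαs : α < s) (hr : 0 < r) {ι : Type*} {x : ι → A} {J : Finset ι}
    (hx : ∀ j ∈ J, x j ∈ K) :
    ∫⁻ y in (⋃ j ∈ J, closedBall (x j) r)ᶜ, ENNReal.ofReal (rieszPotential s x J y) ∂μ ≤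
      ENNReal.ofReal (J.card * (C * (r ^ (α - s) / (1 - α / s)))) := by
  have hmeas (j : ι) : Measurable fun y : A => ENNReal.ofReal (dist y (x j) ^ s)⁻¹ :=
    ((continuous_id.dist continuous_const).measurable.pow_const s).inv.ennreal_ofReal
  calc ∫⁻ y in (⋃ j ∈ J, closedBall (x j) r)ᶜ, ENNReal.ofReal (rieszPotential s x J y) ∂μ
      = ∑ j ∈ J, ∫⁻ y in (⋃ j ∈ J, closedBall (x j) r)ᶜ,
          ENNReal.ofReal (dist y (x j) ^ s)⁻¹ ∂μ := by
        rw [← lintegral_finsetSum _ fun j _ => hmeas j]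
        exact lintegral_congr fun y => ENNReal.ofReal_sum_of_nonneg fun j _ => by positivity
    _ ≤ ∑ j ∈ J, ENNReal.ofReal (C * (r ^ (α - s) / (1 - α / s))) := by
        refine Finset.sum_le_sum fun j hj => (lintegral_mono_set ?_).trans
          (hμ.lintegral_inv_dist_rpow_le hC hs hαs hr (hx j hj))
        exact Set.compl_subset_compl.2
          (Set.subset_biUnion_of_mem (u := fun j => closedBall (x j) r) hj)
    _ = ENNReal.ofReal (J.card * (C * (r ^ (α - s) / (1 - α / s)))) := by
        rw [Finset.sum_const, nsmul_eq_mul, ENNReal.ofReal_mul (Nat.cast_nonneg _),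
          ENNReal.ofReal_natCast]

variable [IsProbabilityMeasure μ]

lemma IsUpperRegularOn.le_measure_compl_biUnion_closedBall (hμ : IsUpperRegularOn μ K α C)
    (hC : 0 ≤ C) (hr : 0 < r) {ι : Type*} {x : ι → A} {J : Finset ι} (hx : ∀ j ∈ J, x j ∈ K) :
    ENNReal.ofReal (1 - J.card * (C * r ^ α)) ≤ μ (⋃ j ∈ J, closedBall (x j) r)ᶜ := by
  have hunion : μ (⋃ j ∈ J, closedBall (x j) r) ≤ ENNReal.ofReal (J.card * (C * r ^ α)) := by
    refine (measure_biUnion_finset_le _ _).trans ?_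
    refine (Finset.sum_le_sum fun j hj => hμ (x j) (hx j hj) r hr).trans_eq ?_
    rw [Finset.sum_const, nsmul_eq_mul, ENNReal.ofReal_mul (Nat.cast_nonneg _),
      ENNReal.ofReal_natCast]
  rw [prob_compl_eq_one_sub (J.measurableSet_biUnion fun _ _ => isClosed_closedBall.measurableSet)]
  refine le_trans ?_ (tsub_le_tsub_left hunion 1)
  rw [← ENNReal.ofReal_one, ENNReal.ofReal_sub _ (by positivity)]

/-- The points outside the balls of radius `r` about the `x j` have measure at least `α / s`, and
the mean of the potential over them is at most `r ^ (-s) / (α / s)`. -/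
lemma IsUpperRegularOn.exists_rieszPotential_le (hμ : IsUpperRegularOn μ K α C)
    (hμK : ∀ᵐ y ∂μ, y ∈ K) (hC : 0 ≤ C) (hα : 0 < α) (hαs : α < s) (hr : 0 < r) {ι : Type*}
    {x : ι → A} {J : Finset ι} (hx : ∀ j ∈ J, x j ∈ K) (hJ : J.card * (C * r ^ α) ≤ 1 - α / s) :
    ∃ y ∈ K, (∀ j ∈ J, r < dist y (x j)) ∧ α / s * rieszPotential s x J y ≤ r ^ (-s) := by
  have hs : 0 < s := hα.trans hαs
  have hdiv : 0 < 1 - α / s := sub_pos.2 ((div_lt_one hs).2 hαs)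
  have hαs0 : 0 < α / s := by positivity
  set D : Set A := (⋃ j ∈ J, closedBall (x j) r)ᶜ with hD
  have hDmeas : MeasurableSet D :=
    (J.measurableSet_biUnion fun _ _ => isClosed_closedBall.measurableSet).compl
  have hDlarge : ENNReal.ofReal (α / s) ≤ μ D :=
    (ENNReal.ofReal_le_ofReal (by linarith)).trans
      (hμ.le_measure_compl_biUnion_closedBall hC hr hx)
  have hDpos : 0 < μ D := (ENNReal.ofReal_pos.2 hαs0).trans_le hDlarge
  have hintegral : ∫⁻ y in D, ENNReal.ofReal (rieszPotential s x J y) ∂μ ≤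
      ENNReal.ofReal (r ^ (-s)) := by
    refine (hμ.lintegral_rieszPotential_le hC hs hαs hr hx).trans (ENNReal.ofReal_le_ofReal ?_)
    calc J.card * (C * (r ^ (α - s) / (1 - α / s)))
        = J.card * (C * r ^ α) / (1 - α / s) * r ^ (-s) := by
          rw [sub_eq_add_neg, Real.rpow_add hr]; ring
      _ ≤ 1 * r ^ (-s) := by gcongr; exact (div_le_one hdiv).2 hJ
      _ = r ^ (-s) := one_mul _
  obtain ⟨y, hy, hmean⟩ := exists_notMem_null_le_laverage (μ := μ.restrict D)
    (Measure.restrict_eq_zero.not.2 hDpos.ne')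
    (measurable_rieszPotential s x J).ennreal_ofReal.aemeasurable
    (ae_iff.1 ((ae_restrict_of_ae hμK).and (ae_restrict_mem hDmeas)))
  obtain ⟨hyK, hyD⟩ : y ∈ K ∧ y ∈ D := not_not.1 hy
  refine ⟨y, hyK, by simpa [hD] using hyD, ?_⟩
  rw [mul_comm, ← ENNReal.ofReal_le_ofReal_iff (by positivity), ENNReal.ofReal_mul' hαs0.le]
  calc ENNReal.ofReal (rieszPotential s x J y) * ENNReal.ofReal (α / s)
      ≤ (∫⁻ y in D, ENNReal.ofReal (rieszPotential s x J y) ∂μ) / μ D * μ D := by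
        gcongr
        exact hmean.trans_eq (setLAverage_eq _ _ _)
    _ ≤ ∫⁻ y in D, ENNReal.ofReal (rieszPotential s x J y) ∂μ :=
        (mul_comm _ _).trans_le ENNReal.mul_div_le
    _ ≤ ENNReal.ofReal (r ^ (-s)) := hintegral

lemma IsEnergyMinimizer.mul_le_dist {N : ℕ} {x : Fin N → A}
    (hx : IsEnergyMinimizer s (fun _ _ => 1) K x) (hμ : IsUpperRegularOn μ K α C)
    (hμK : ∀ᵐ y ∂μ, y ∈ K) (hC : 0 ≤ C) (hα : 0 < α) (hαs : α < s) (hr : 0 < r)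
    (hN : N * (C * r ^ α) ≤ 1 - α / s) {i j : Fin N} (hij : i ≠ j) :
    (α / s) ^ (1 / s) * r ≤ dist (x i) (x j) := by
  have hs : 0 < s := hα.trans hαs
  set J := Finset.univ.erase i
  have hJ : (J.card : ℝ) * (C * r ^ α) ≤ 1 - α / s := by
    refine le_trans ?_ hN
    gcongr
    exact (Finset.card_le_univ J).trans_eq (Fintype.card_fin N)
  obtain ⟨y, hyK, hyx, hy⟩ := hμ.exists_rieszPotential_le hμK hC hα hαs hr
    (fun j _ => hx.2.1 j) hJ
  have hdist : 0 < dist (x i) (x j) := dist_pos.2 (hx.1.ne hij)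
  have hpotential : α / s * (dist (x i) (x j) ^ s)⁻¹ ≤ (r ^ s)⁻¹ := by
    rw [← Real.rpow_neg hr.le]
    refine le_trans ?_ hy
    gcongr
    calc (dist (x i) (x j) ^ s)⁻¹ ≤ rieszPotential s x J (x i) :=
          inv_dist_rpow_le_rieszPotential (Finset.mem_erase.2 ⟨hij.symm, Finset.mem_univ j⟩) _
      _ ≤ rieszPotential s x J y := hx.rieszPotential_le i hyK fun k hk h =>
          (hr.trans (hyx k (Finset.mem_erase.2 ⟨hk, Finset.mem_univ k⟩))).ne' (dist_eq_zero.2 h)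
  have hpow : α / s * r ^ s ≤ dist (x i) (x j) ^ s := by
    rw [← div_eq_mul_inv, div_le_iff₀ (by positivity), inv_mul_eq_div,
      le_div_iff₀ (by positivity)] at hpotential
    exact hpotential
  calc (α / s) ^ (1 / s) * r = (α / s * r ^ s) ^ s⁻¹ := by
        rw [Real.mul_rpow (by positivity) (by positivity), Real.rpow_rpow_inv hr.le hs.ne', one_div]
    _ ≤ dist (x i) (x j) := (Real.rpow_inv_le_iff_of_pos (by positivity) hdist.le hs).2 hpow

lemma IsEnergyMinimizer.le_sepDist {N : ℕ} (hN : 2 ≤ N) {x : Fin N → A}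
    (hx : IsEnergyMinimizer s (fun _ _ => 1) K x) (hμ : IsUpperRegularOn μ K α C)
    (hμK : ∀ᵐ y ∂μ, y ∈ K) (hC : 0 < C) (hα : 0 < α) (hαs : α < s) :
    C⁻¹ ^ (1 / α) * (1 - α / s) ^ (1 / α) * (α / s) ^ (1 / s) * (N : ℝ) ^ (-(1 / α)) ≤
      sepDist x := by
  have hN0 : (0 : ℝ) < N := by exact_mod_cast (by omega : 0 < N)
  have hdiv : 0 < 1 - α / s := sub_pos.2 ((div_lt_one (hα.trans hαs)).2 hαs)
  set r : ℝ := (C⁻¹ * (1 - α / s) * (N : ℝ)⁻¹) ^ α⁻¹ with hr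
  have hrα : N * (C * r ^ α) = 1 - α / s := by
    rw [hr, Real.rpow_inv_rpow (by positivity) hα.ne']
    field_simp
  have hprod : C⁻¹ ^ (1 / α) * (1 - α / s) ^ (1 / α) * (α / s) ^ (1 / s) *
      (N : ℝ) ^ (-(1 / α)) = (α / s) ^ (1 / s) * r := by
    rw [hr, Real.mul_rpow (by positivity) (by positivity),
      Real.mul_rpow (by positivity) hdiv.le, Real.inv_rpow hN0.le, Real.rpow_neg hN0.le, one_div α]
    ring
  rw [hprod]
  exact le_sepDist_of_forall_le_dist hN fun i j hij =>
    hx.mul_le_dist hμ hμK hC.le hα hαs (by positivity) hrα.le hij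

end UpperRegular

lemma lintegral_comp_mul_div_sqrt_one_sub_sq {r : ℝ} (hr : 0 < r) (f : ℝ → ℝ≥0∞) :
    ∫⁻ u in Set.Ioo (-1) 1, ENNReal.ofReal (r / √(1 - u ^ 2) ^ 3) * f (r * (u / √(1 - u ^ 2))) =
      ∫⁻ h, f h := by
  have hderiv : ∀ u ∈ Set.Ioo (-1 : ℝ) 1, HasDerivWithinAt (fun u => r * (u / √(1 - u ^ 2)))
      (r / √(1 - u ^ 2) ^ 3) (Set.Ioo (-1) 1) u := by
    intro u hu
    have hpos : 0 < 1 - u ^ 2 := by nlinarith [hu.1, hu.2]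
    have hsqrt : 0 < √(1 - u ^ 2) := Real.sqrt_pos.2 hpos
    refine ((((hasDerivAt_id' u).fun_div (((hasDerivAt_pow 2 u).const_sub 1).sqrt hpos.ne')
      hsqrt.ne').const_mul r).congr_deriv ?_).hasDerivWithinAt
    field_simp
    rw [Real.sq_sqrt hpos.le]
    push_cast
    ring
  have hcomp : (fun u : ℝ => r * (u / √(1 - u ^ 2))) =
      (r * ·) ∘ OpenPartialHomeomorph.univUnitBall.symm := by
    ext u
    simp [OpenPartialHomeomorph.univUnitBall, div_eq_inv_mul]
  have hsource :
      Set.Ioo (-1 : ℝ) 1 = (OpenPartialHomeomorph.univUnitBall (E := ℝ)).symm.source := by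
    simp [OpenPartialHomeomorph.univUnitBall, Real.ball_eq_Ioo]
  have hinj : Set.InjOn (fun u : ℝ => r * (u / √(1 - u ^ 2))) (Set.Ioo (-1) 1) := by
    rw [hcomp, hsource]
    exact (mul_right_injective₀ hr.ne').comp_injOn (OpenPartialHomeomorph.injOn _)
  have himage : (fun u : ℝ => r * (u / √(1 - u ^ 2))) '' Set.Ioo (-1) 1 = Set.univ := by
    rw [hcomp, hsource, Set.image_comp, OpenPartialHomeomorph.image_source_eq_target,
      OpenPartialHomeomorph.symm_target, OpenPartialHomeomorph.univUnitBall_source, Set.image_univ,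
      (mul_left_surjective₀ hr.ne').range_eq]
  rw [← setLIntegral_univ (fun h => f h), ← himage,
    lintegral_image_eq_lintegral_abs_deriv_mul measurableSet_Ioo hderiv hinj]
  refine setLIntegral_congr_fun measurableSet_Ioo fun u _ => ?_
  simp only [abs_of_nonneg (show 0 ≤ r / √(1 - u ^ 2) ^ 3 by positivity)]

lemma volume_axialCone_slice_eq_setLIntegral {r : ℝ} (hr : 0 < r) {B : Set ℝ}
    (hB : MeasurableSet B) :
    volume {h : ℝ | h ^ 2 + r ^ 2 < 1 ∧ h / √(h ^ 2 + r ^ 2) ∈ B} =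
      ∫⁻ u in B ∩ Set.Ioo (-1) 1,
        if r < √(1 - u ^ 2) then ENNReal.ofReal (r / √(1 - u ^ 2) ^ 3) else 0 := by
  set S : Set ℝ := {h | h ^ 2 + r ^ 2 < 1 ∧ h / √(h ^ 2 + r ^ 2) ∈ B} with hS
  have hmeas : MeasurableSet S := by
    rw [hS, Set.ofPred_and]
    exact (measurableSet_lt (by fun_prop) measurable_const).inter
      (measurableSet_preimage (by fun_prop) hB)
  rw [← lintegral_indicator_one hmeas, ← lintegral_comp_mul_div_sqrt_one_sub_sq hr,
    ← setLIntegral_indicator hB]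
  refine setLIntegral_congr_fun measurableSet_Ioo fun u hu => ?_
  have hpos : 0 < 1 - u ^ 2 := by nlinarith [hu.1, hu.2]
  have hsqrt : 0 < √(1 - u ^ 2) := Real.sqrt_pos.2 hpos
  have hnorm : (r * (u / √(1 - u ^ 2))) ^ 2 + r ^ 2 = (r / √(1 - u ^ 2)) ^ 2 := by
    field_simp
    rw [Real.sq_sqrt hpos.le]
    ring
  have hmem : r * (u / √(1 - u ^ 2)) ∈ S ↔ r < √(1 - u ^ 2) ∧ u ∈ B := by
    have hdir : r * (u / √(1 - u ^ 2)) / (r / √(1 - u ^ 2)) = u := by field_simp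
    rw [hS, Set.mem_ofPred, hnorm, Real.sqrt_sq (div_pos hr hsqrt).le, hdir,
      sq_lt_one_iff₀ (by positivity), div_lt_one hsqrt]
  classical
  by_cases huB : u ∈ B <;> simp [Set.indicator_apply, hmem, huB]

section Cone

open Module

variable {F : Type*} [NormedAddCommGroup F]

variable (F) in
/-- The points of the unit ball of the Hilbert sum `ℝ ⊕ F` whose direction has first coordinate
in `B`. The ball is spelled out because the norm of `ℝ × F` is the maximum norm. -/
def axialCone (B : Set ℝ) : Set (ℝ × F) :=
  {q | q.1 ^ 2 + ‖q.2‖ ^ 2 < 1 ∧ q.1 / √(q.1 ^ 2 + ‖q.2‖ ^ 2) ∈ B}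

variable [MeasurableSpace F] [BorelSpace F]

lemma measurableSet_axialCone {B : Set ℝ} (hB : MeasurableSet B) :
    MeasurableSet (axialCone F B) := by
  rw [axialCone, Set.ofPred_and]
  exact (measurableSet_lt (by fun_prop) measurable_const).inter
    (measurableSet_preimage (by fun_prop) hB)

variable [NormedSpace ℝ F] [FiniteDimensional ℝ F] [Nontrivial F] (μ : Measure F)
  [μ.IsAddHaarMeasure]

lemma setLIntegral_ball_norm {ρ : ℝ} (hρ : 0 ≤ ρ) :
    ∫⁻ v in ball (0 : F) ρ, ENNReal.ofReal ‖v‖ ∂μ =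
      ENNReal.ofReal (finrank ℝ F / (finrank ℝ F + 1) * ρ ^ (finrank ℝ F + 1)) *
        μ (ball 0 1) := by
  have hint : IntegrableOn (fun v : F => ‖v‖) (ball 0 ρ) μ :=
    (continuous_norm.continuousOn.integrableOn_compact (isCompact_closedBall 0 ρ)).mono_set
      ball_subset_closedBall
  have hpow (t : ℝ) : t ^ (finrank ℝ F - 1) * t = t ^ finrank ℝ F := by
    rw [← pow_succ, Nat.sub_add_cancel finrank_pos]
  have hrad : ∫ v in ball (0 : F) ρ, ‖v‖ ∂μ =
      finrank ℝ F / (finrank ℝ F + 1) * ρ ^ (finrank ℝ F + 1) * μ.real (ball 0 1) := by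
    have hball : ∫ v in ball (0 : F) ρ, ‖v‖ ∂μ =
        ∫ v, (Set.Iio ρ).indicator id ‖v‖ ∂μ := by
      rw [← integral_indicator measurableSet_ball]
      congr! 2 with v
      simp [Set.indicator]
    have hinner : ∫ t in Set.Ioi (0 : ℝ), t ^ (finrank ℝ F - 1) • (Set.Iio ρ).indicator id t =
        ∫ t in (0 : ℝ)..ρ, t ^ finrank ℝ F := by
      rw [intervalIntegral.integral_of_le hρ, integral_Ioc_eq_integral_Ioo, ← Set.Ioi_inter_Iio,
        ← setIntegral_indicator measurableSet_Iio]
      refine setIntegral_congr_fun measurableSet_Ioi fun t _ => ?_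
      by_cases htρ : t < ρ <;> simp [Set.indicator, htρ, hpow t]
    rw [hball, integral_fun_norm_addHaar, hinner, integral_pow, nsmul_eq_mul, smul_eq_mul]
    rw [zero_pow (Nat.succ_ne_zero _), sub_zero]
    ring
  rw [← ofReal_integral_eq_lintegral_ofReal hint (ae_of_all _ norm_nonneg), hrad,
    ENNReal.ofReal_mul (by positivity), ofReal_measureReal]

lemma lintegral_ite_norm_lt_sqrt {a : ℝ} (ha : 0 < a) :
    ∫⁻ v, (if ‖v‖ < √a then ENNReal.ofReal (‖v‖ / √a ^ 3) else 0) ∂μ =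
      ENNReal.ofReal (finrank ℝ F / (finrank ℝ F + 1)) * μ (ball 0 1) *
        ENNReal.ofReal (a ^ ((finrank ℝ F : ℝ) / 2 - 1)) := by
  have hsqrt : 0 < √a := Real.sqrt_pos.2 ha
  have hpow : √a ^ (finrank ℝ F + 1) = √a ^ 3 * a ^ ((finrank ℝ F : ℝ) / 2 - 1) := by
    rw [Real.sqrt_eq_rpow, ← Real.rpow_mul_natCast ha.le, ← Real.rpow_mul_natCast ha.le,
      ← Real.rpow_add ha]
    push_cast
    congr 1
    ring
  calc ∫⁻ v, (if ‖v‖ < √a then ENNReal.ofReal (‖v‖ / √a ^ 3) else 0) ∂μ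
      = ∫⁻ v in ball 0 √a, ENNReal.ofReal (√a ^ 3)⁻¹ * ENNReal.ofReal ‖v‖ ∂μ := by
        rw [← lintegral_indicator measurableSet_ball]
        refine lintegral_congr fun v => ?_
        classical
        simp only [Set.indicator_apply, mem_ball_zero_iff]
        rw [← ENNReal.ofReal_mul (by positivity), ← div_eq_inv_mul]
    _ = ENNReal.ofReal (finrank ℝ F / (finrank ℝ F + 1)) * μ (ball 0 1) *
        ENNReal.ofReal (a ^ ((finrank ℝ F : ℝ) / 2 - 1)) := by
        rw [lintegral_const_mul _ (by fun_prop), setLIntegral_ball_norm μ hsqrt.le, ← mul_assoc,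
          ← ENNReal.ofReal_mul (by positivity), mul_right_comm,
          ← ENNReal.ofReal_mul (by positivity), hpow]
        congr 2
        field_simp

lemma volume_prod_axialCone_eq_setLIntegral {B : Set ℝ} (hB : MeasurableSet B) :
    volume.prod μ (axialCone F B) =
      ENNReal.ofReal (finrank ℝ F / (finrank ℝ F + 1)) * μ (ball 0 1) *
        ∫⁻ u in B ∩ Set.Ioo (-1) 1,
          ENNReal.ofReal ((1 - u ^ 2) ^ ((finrank ℝ F : ℝ) / 2 - 1)) := by
  let density (v : F) (u : ℝ) : ℝ≥0∞ :=
    if ‖v‖ < √(1 - u ^ 2) then ENNReal.ofReal (‖v‖ / √(1 - u ^ 2) ^ 3) else 0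
  have hdensity : Measurable (Function.uncurry density) :=
    Measurable.ite (measurableSet_lt (by fun_prop) (by fun_prop)) (by fun_prop) measurable_const
  calc volume.prod μ (axialCone F B)
      = ∫⁻ v, (∫⁻ u in B ∩ Set.Ioo (-1) 1, density v u) ∂μ := by
        rw [Measure.prod_apply_symm (measurableSet_axialCone hB)]
        refine lintegral_congr_ae ?_
        filter_upwards [μ.ae_ne 0] with v hv
        exact volume_axialCone_slice_eq_setLIntegral (norm_pos_iff.2 hv) hB
    _ = ∫⁻ u in B ∩ Set.Ioo (-1) 1, ∫⁻ v, density v u ∂μ :=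
        lintegral_lintegral_swap hdensity.aemeasurable
    _ = ∫⁻ u in B ∩ Set.Ioo (-1) 1, ENNReal.ofReal (finrank ℝ F / (finrank ℝ F + 1)) *
          μ (ball 0 1) * ENNReal.ofReal ((1 - u ^ 2) ^ ((finrank ℝ F : ℝ) / 2 - 1)) :=
        setLIntegral_congr_fun (hB.inter measurableSet_Ioo) fun u hu =>
          lintegral_ite_norm_lt_sqrt μ (by nlinarith [hu.2.1, hu.2.2])
    _ = ENNReal.ofReal (finrank ℝ F / (finrank ℝ F + 1)) * μ (ball 0 1) *
          ∫⁻ u in B ∩ Set.Ioo (-1) 1, ENNReal.ofReal ((1 - u ^ 2) ^ ((finrank ℝ F : ℝ) / 2 - 1)) :=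
        lintegral_const_mul _ (by fun_prop)

end Cone

section Sphere

open Module

variable {E : Type*} [NormedAddCommGroup E] [InnerProductSpace ℝ E]

lemma toSpanUnitSingleton_symm_orthogonalProjectionOnto {p : E} (hp : ‖p‖ = 1) (y : E) :
    (LinearIsometryEquiv.toSpanUnitSingleton p hp).symm
      ((ℝ ∙ p).orthogonalProjectionOnto y) = inner ℝ p y := by
  rw [LinearIsometryEquiv.symm_apply_eq]
  ext
  rw [← Submodule.starProjection_apply, Submodule.starProjection_unit_singleton ℝ hp,
    LinearIsometryEquiv.toSpanUnitSingleton_apply]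

lemma norm_sq_eq_inner_sq_add_norm_orthogonalProjectionOnto_sq {p : E} (hp : ‖p‖ = 1) (y : E) :
    ‖y‖ ^ 2 = inner ℝ p y ^ 2 + ‖(ℝ ∙ p)ᗮ.orthogonalProjectionOnto y‖ ^ 2 := by
  have hnorm : ‖(ℝ ∙ p).orthogonalProjectionOnto y‖ = |inner ℝ p y| := by
    rw [← toSpanUnitSingleton_symm_orthogonalProjectionOnto hp y, ← Real.norm_eq_abs,
      LinearIsometryEquiv.norm_map]
  rw [Submodule.norm_sq_eq_add_norm_sq_projection y (ℝ ∙ p), hnorm, sq_abs]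

variable [FiniteDimensional ℝ E] [MeasurableSpace E] [BorelSpace E]

lemma measurePreserving_inner_prodMk_orthogonalProjectionOnto {p : E} (hp : ‖p‖ = 1) :
    MeasurePreserving (fun y : E => (inner ℝ p y, (ℝ ∙ p)ᗮ.orthogonalProjectionOnto y))
      volume (volume.prod volume) := by
  have h := (((LinearIsometryEquiv.toSpanUnitSingleton p hp).symm.measurePreserving.prod
    (.id volume)).comp (WithLp.volume_preserving_ofLp (ℝ ∙ p) (ℝ ∙ p)ᗮ)).comp
      (ℝ ∙ p).orthogonalDecomposition.measurePreserving
  simpa [Function.comp_def, toSpanUnitSingleton_symm_orthogonalProjectionOnto] using h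

lemma gammaD_pos {d : ℕ} (hd : d ≠ 0) : 0 < gammaD d := by
  have : (0 : ℝ) < d := by positivity
  rw [gammaD]
  positivity

lemma gammaD_mul_volume_ball {F : Type*} [NormedAddCommGroup F] [InnerProductSpace ℝ F]
    [FiniteDimensional ℝ F] [MeasurableSpace F] [BorelSpace F] [Nontrivial F]
    (hEF : finrank ℝ E = finrank ℝ F + 1) :
    ENNReal.ofReal (gammaD (finrank ℝ F)) * volume (ball (0 : E) 1) =
      ENNReal.ofReal (finrank ℝ F / (finrank ℝ F + 1)) * volume (ball (0 : F) 1) := by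
  have : Nontrivial E := nontrivial_of_finrank_pos (R := ℝ) (by omega)
  have hF : (0 : ℝ) < finrank ℝ F := by exact_mod_cast finrank_pos
  rw [InnerProductSpace.volume_ball, InnerProductSpace.volume_ball, hEF, ENNReal.ofReal_one,
    one_pow, one_mul, one_pow, one_mul, ← ENNReal.ofReal_mul (gammaD_pos finrank_pos.ne').le,
    ← ENNReal.ofReal_mul (by positivity), gammaD, Real.Gamma_one_half_eq]
  push_cast
  rw [Real.Gamma_add_one (by positivity), Real.Gamma_add_one (by positivity)]
  congr 1
  field_simp
  ring

lemma volume_cone_eq_setLIntegral {d : ℕ} (hd : d ≠ 0) (hE : finrank ℝ E = d + 1)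
    {p : E} (hp : ‖p‖ = 1) {B : Set ℝ} (hB : MeasurableSet B) :
    volume {y : E | ‖y‖ < 1 ∧ inner ℝ p y / ‖y‖ ∈ B} =
      ENNReal.ofReal (gammaD d) * volume (ball (0 : E) 1) *
        ∫⁻ u in B ∩ Set.Ioo (-1) 1, ENNReal.ofReal ((1 - u ^ 2) ^ ((d : ℝ) / 2 - 1)) := by
  have : Fact (finrank ℝ E = d + 1) := ⟨hE⟩
  have hF : finrank ℝ (ℝ ∙ p)ᗮ = d :=
    Submodule.finrank_orthogonal_span_singleton (norm_ne_zero_iff.1 (by simp [hp]))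
  have : Nontrivial (ℝ ∙ p)ᗮ := nontrivial_of_finrank_pos (hF ▸ Nat.pos_of_ne_zero hd)
  have hpreimage : {y : E | ‖y‖ < 1 ∧ inner ℝ p y / ‖y‖ ∈ B} =
      (fun y : E => (inner ℝ p y, (ℝ ∙ p)ᗮ.orthogonalProjectionOnto y)) ⁻¹'
        axialCone (ℝ ∙ p)ᗮ B := by
    ext y
    simp only [axialCone, Set.mem_ofPred, Set.mem_preimage,
      ← norm_sq_eq_inner_sq_add_norm_orthogonalProjectionOnto_sq hp, Real.sqrt_sq (norm_nonneg y),
      sq_lt_one_iff₀ (norm_nonneg y)]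
  have hconst := gammaD_mul_volume_ball (E := E) (F := (ℝ ∙ p)ᗮ) (by rw [hF, hE])
  have hprod := volume_prod_axialCone_eq_setLIntegral (volume : Measure (ℝ ∙ p)ᗮ) hB
  rw [← hconst, hF] at hprod
  rw [hpreimage, (measurePreserving_inner_prodMk_orthogonalProjectionOnto hp).measure_preimage
    (measurableSet_axialCone hB).nullMeasurableSet, hprod]

variable (E) in
/-- The normalized surface measure of the unit sphere of `E`, as a measure on `E`. -/
def uniformSphere : Measure E :=
  (ProbabilityTheory.cond (volume : Measure E).toSphere Set.univ).map (↑)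

instance [Nontrivial E] : IsProbabilityMeasure (uniformSphere E) :=
  have : IsProbabilityMeasure (ProbabilityTheory.cond (volume : Measure E).toSphere Set.univ) :=
    ProbabilityTheory.cond_isProbabilityMeasure
      (Measure.measure_univ_ne_zero.2 (Measure.toSphere_ne_zero _))
  Measure.isProbabilityMeasure_map measurable_subtype_coe.aemeasurable

lemma ae_uniformSphere_mem_sphere : ∀ᵐ y ∂uniformSphere E, y ∈ sphere (0 : E) 1 :=
  (ae_map_iff measurable_subtype_coe.aemeasurable isClosed_sphere.measurableSet).2
    (ae_of_all _ Subtype.prop)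

open scoped Pointwise in
lemma Ioo_smul_image_preimage_coe {V : Type*} [NormedAddCommGroup V] [NormedSpace ℝ V]
    (S : Set V) :
    Set.Ioo (0 : ℝ) 1 • ((↑) '' ((↑) ⁻¹' S : Set (sphere (0 : V) 1)) : Set V) =
      {y | ‖y‖ < 1 ∧ ‖y‖⁻¹ • y ∈ S} \ {0} := by
  ext y
  constructor
  · rintro ⟨t, ht, _, ⟨p, hp, rfl⟩, rfl⟩
    have hnorm : ‖t • (p : V)‖ = t := by
      rw [norm_smul, norm_eq_of_mem_sphere, mul_one, Real.norm_of_nonneg ht.1.le]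
    refine ⟨⟨hnorm.trans_lt ht.2, ?_⟩, norm_ne_zero_iff.1 (hnorm.trans_ne ht.1.ne')⟩
    rw [hnorm, inv_smul_smul₀ ht.1.ne']
    exact hp
  · rintro ⟨⟨hy, hyS⟩, hy0⟩
    have hpos : 0 < ‖y‖ := norm_pos_iff.2 hy0
    refine ⟨‖y‖, ⟨hpos, hy⟩, ‖y‖⁻¹ • y, ⟨⟨‖y‖⁻¹ • y, ?_⟩, hyS, rfl⟩, smul_inv_smul₀ hpos.ne' y⟩
    rw [mem_sphere_zero_iff_norm, norm_smul, norm_inv, norm_norm, inv_mul_cancel₀ hpos.ne']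

lemma uniformSphere_apply [Nontrivial E] {S : Set E} (hS : MeasurableSet S) :
    uniformSphere E S = (volume (ball (0 : E) 1))⁻¹ * volume {y | ‖y‖ < 1 ∧ ‖y‖⁻¹ • y ∈ S} := by
  have hdim : (finrank ℝ E : ℝ≥0∞) ≠ 0 := Nat.cast_ne_zero.2 finrank_pos.ne'
  rw [uniformSphere, Measure.map_apply measurable_subtype_coe hS,
    ProbabilityTheory.cond_apply .univ, Set.univ_inter, Measure.toSphere_apply_univ,
    Measure.toSphere_apply' _ (measurable_subtype_coe hS), Ioo_smul_image_preimage_coe,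
    measure_sdiff_null (measure_singleton 0), ENNReal.mul_inv (.inl hdim) (.inl (by finiteness)),
    mul_mul_mul_comm, ENNReal.inv_mul_cancel hdim (by finiteness), one_mul]

lemma uniformSphere_inner_preimage {d : ℕ} (hd : d ≠ 0) (hE : finrank ℝ E = d + 1)
    {p : E} (hp : ‖p‖ = 1) {B : Set ℝ} (hB : MeasurableSet B) :
    uniformSphere E ((inner ℝ p ·) ⁻¹' B) = ENNReal.ofReal (gammaD d) *
        ∫⁻ u in B ∩ Set.Ioo (-1) 1, ENNReal.ofReal ((1 - u ^ 2) ^ ((d : ℝ) / 2 - 1)) := by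
  have : Nontrivial E := nontrivial_of_finrank_pos (R := ℝ) (by omega)
  have hcone : {y : E | ‖y‖ < 1 ∧ ‖y‖⁻¹ • y ∈ (inner ℝ p ·) ⁻¹' B} =
      {y : E | ‖y‖ < 1 ∧ inner ℝ p y / ‖y‖ ∈ B} := by
    simp only [Set.mem_preimage, real_inner_smul_right, div_eq_inv_mul]
  have hball := ENNReal.inv_mul_cancel (measure_ball_pos volume (0 : E) one_pos).ne'
    measure_ball_lt_top.ne
  rw [uniformSphere_apply (measurableSet_preimage (by fun_prop) hB), hcone,
    volume_cone_eq_setLIntegral hd hE hp hB, ← mul_assoc, mul_left_comm, hball, mul_one]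

lemma setLIntegral_Ioc_two_sub_rpow {β c : ℝ} (hβ : 0 ≤ β) (hc : c ≤ 1) :
    ∫⁻ u in Set.Ioc c 1, ENNReal.ofReal ((2 - 2 * u) ^ β) =
      ENNReal.ofReal ((2 - 2 * c) ^ (β + 1) / (2 * (β + 1))) := by
  have hcont : Continuous fun u : ℝ => (2 - 2 * u) ^ β :=
    (by fun_prop : Continuous fun u : ℝ => 2 - 2 * u).rpow_const fun _ => .inr hβ
  have hnonneg : 0 ≤ᵐ[volume.restrict (Set.Ioc c 1)] fun u : ℝ => (2 - 2 * u) ^ β :=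
    ae_restrict_of_forall_mem measurableSet_Ioc fun u hu =>
      Real.rpow_nonneg (by linarith [hu.2]) β
  rw [← ofReal_integral_eq_lintegral_ofReal hcont.integrableOn_Ioc hnonneg,
    ← intervalIntegral.integral_of_le hc,
    intervalIntegral.integral_comp_sub_mul (fun t => t ^ β) two_ne_zero,
    integral_rpow (.inl (by linarith)), mul_one, sub_self, Real.zero_rpow (by linarith), sub_zero,
    smul_eq_mul, inv_mul_eq_div, div_div, mul_comm (β + 1)]

lemma uniformSphere_inner_preimage_Ici_le {d : ℕ} (hd : 2 ≤ d) (hE : finrank ℝ E = d + 1) {p : E}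
    (hp : ‖p‖ = 1) {c : ℝ} (hc : c ≤ 1) :
    uniformSphere E ((inner ℝ p ·) ⁻¹' Set.Ici c) ≤
      ENNReal.ofReal (gammaD d / d * (2 - 2 * c) ^ ((d : ℝ) / 2)) := by
  have hd2 : (2 : ℝ) ≤ d := by exact_mod_cast hd
  have hγ := gammaD_pos (show d ≠ 0 by omega)
  have hdensity : ∀ u ∈ Set.Ici c ∩ Set.Ioo (-1) 1,
      ENNReal.ofReal ((1 - u ^ 2) ^ ((d : ℝ) / 2 - 1)) ≤
        ENNReal.ofReal ((2 - 2 * u) ^ ((d : ℝ) / 2 - 1)) := by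
    rintro u ⟨-, hu⟩
    exact ENNReal.ofReal_le_ofReal (Real.rpow_le_rpow (by nlinarith [hu.1, hu.2])
      (by nlinarith [hu.1, hu.2]) (by linarith))
  calc uniformSphere E ((inner ℝ p ·) ⁻¹' Set.Ici c)
      = ENNReal.ofReal (gammaD d) * ∫⁻ u in Set.Ici c ∩ Set.Ioo (-1) 1,
          ENNReal.ofReal ((1 - u ^ 2) ^ ((d : ℝ) / 2 - 1)) :=
        uniformSphere_inner_preimage (by omega) hE hp measurableSet_Ici
    _ ≤ ENNReal.ofReal (gammaD d) * ∫⁻ u in Set.Ici c ∩ Set.Ioo (-1) 1,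
          ENNReal.ofReal ((2 - 2 * u) ^ ((d : ℝ) / 2 - 1)) := by
        gcongr ENNReal.ofReal (gammaD d) * ?_
        exact setLIntegral_mono' (measurableSet_Ici.inter measurableSet_Ioo) hdensity
    _ ≤ ENNReal.ofReal (gammaD d) * ∫⁻ u in Set.Icc c 1,
          ENNReal.ofReal ((2 - 2 * u) ^ ((d : ℝ) / 2 - 1)) := by
        gcongr
        exact fun u hu => ⟨hu.1, hu.2.2.le⟩
    _ = ENNReal.ofReal (gammaD d / d * (2 - 2 * c) ^ ((d : ℝ) / 2)) := by
        rw [← setLIntegral_congr Ioc_ae_eq_Icc, setLIntegral_Ioc_two_sub_rpow (by linarith) hc,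
          ← ENNReal.ofReal_mul hγ.le, sub_add_cancel]
        congr 1
        field_simp

lemma isUpperRegularOn_uniformSphere {d : ℕ} (hd : 2 ≤ d) (hE : finrank ℝ E = d + 1) :
    IsUpperRegularOn (uniformSphere E) (sphere (0 : E) 1) d (gammaD d / d) := by
  intro p hp t ht
  rw [mem_sphere_zero_iff_norm] at hp
  have hcap : closedBall p t ≤ᵐ[uniformSphere E] (inner ℝ p ·) ⁻¹' Set.Ici (1 - t ^ 2 / 2) := by
    filter_upwards [ae_uniformSphere_mem_sphere] with y hy hyt
    have hdist : ‖y - p‖ ^ 2 ≤ t ^ 2 := by gcongr; exact mem_closedBall_iff_norm.1 hyt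
    rw [norm_sub_sq_real, mem_sphere_zero_iff_norm.1 hy, hp, real_inner_comm] at hdist
    exact Set.mem_Ici.2 (by linarith)
  refine (measure_mono_ae hcap).trans
    ((uniformSphere_inner_preimage_Ici_le hd hE hp (by nlinarith)).trans_eq ?_)
  rw [show 2 - 2 * (1 - t ^ 2 / 2) = t ^ 2 by ring, ← Real.rpow_natCast_mul ht.le]
  congr 3
  push_cast
  ring

end Sphere

/-- inequality `\eqref{sep-uniform}`: explicit separation bound for
unweighted minimal Riesz `s`-energy configurations on the sphere `𝕊^d`, `s > d`. -/
theorem stmt_15 (d : ℕ) (hd : 2 ≤ d) (s : ℝ) (hs : (d : ℝ) < s)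
    (N : ℕ) (hN : 2 ≤ N) (x : Fin N → EuclideanSpace ℝ (Fin (d + 1)))
    (hx : IsEnergyMinimizer s (fun _ _ => (1 : ℝ))
      (sphere (0 : EuclideanSpace ℝ (Fin (d + 1))) 1) x) :
    sepDist x ≥ ((d : ℝ) / gammaD d) ^ (1 / (d : ℝ)) * (1 - (d : ℝ) / s) ^ (1 / (d : ℝ)) *
      ((d : ℝ) / s) ^ (1 / s) * (N : ℝ) ^ (-(1 / (d : ℝ))) := by
  have hd0 : (0 : ℝ) < d := by exact_mod_cast (by omega : 0 < d)
  have hreg := isUpperRegularOn_uniformSphere (E := EuclideanSpace ℝ (Fin (d + 1))) hd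
    finrank_euclideanSpace_fin
  have hsep := hx.le_sepDist hN hreg ae_uniformSphere_mem_sphere
    (div_pos (gammaD_pos (by omega)) hd0) hd0 hs
  rwa [inv_div] at hsep
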